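/- (Strict unimodality of Gaussian coefficients) For all natural numbers ℓ, m ≥ 8 and every k with 2 ≤ k ≤ ℓm/2, one has p_k(ℓ,m) − p_{k−1}(ℓ,m) ≥ 1. -/

import Mathlib

/-- `rectPartitions k l m` is the number of integer partitions of `k` fitting in an
`l × m` rectangle: at most `l` parts, each part at most `m`. -/
noncomputable def rectPartitions (k l m : ℕ) : ℕ :=
  Nat.card {π : Nat.Partition k // Multiset.card π.parts ≤ l ∧ ∀ i ∈ π.parts, i ≤ m}

/-!
The lowering operator of `𝔰𝔩₂` acts on the polynomials of degree `l` in the coefficients of the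
generic binary form of degree `m`; those of weight `k` form a space of dimension `p_k(l, m)`. Up to
the middle weight it is surjective, so `p_{k-1}(l, m) < p_k(l, m)` exactly when some nonzero
seminvariant has degree `l` and weight `k`. The lowering operator is a derivation of a polynomial
ring over `ℚ`, so products of nonzero seminvariants are nonzero seminvariants, and strict
unimodality for `(l, m)` and `(8, m)` implies it for `(l + 8, m)`. By the symmetry of `l` and `m`
this leaves the cases `8 ≤ l, m < 16`, which are computed by reading the numbers `p_k(l, m)` off as
the digits of a Gaussian binomial coefficient at a large power of two.
-/

section BoxMultisets

/-- The partitions of `k` fitting in an `l × m` rectangle, padded with zeros to exactly `l` parts.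
The padding makes them the exponents of monomials of degree exactly `l`. -/
def boxMultisets (l m k : ℕ) : Set (Multiset ℕ) :=
  {s | s.card = l ∧ (∀ i ∈ s, i ≤ m) ∧ s.sum = k}

theorem filter_ne_zero_add_replicate (s : Multiset ℕ) :
    s.filter (· ≠ 0) + Multiset.replicate (s.card - (s.filter (· ≠ 0)).card) 0 = s := by
  have hsplit := Multiset.filter_add_not (· ≠ 0) s
  have hcard := congrArg Multiset.card hsplit
  have hzeros : s.filter (¬ · ≠ 0) = Multiset.replicate (s.filter (¬ · ≠ 0)).card 0 :=
    Multiset.eq_replicate_card.2 fun b hb => by simpa using Multiset.of_mem_filter hb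
  rw [Multiset.card_add] at hcard
  rw [← hcard, Nat.add_sub_cancel_left, ← hzeros, hsplit]

theorem filter_ne_zero_parts_add_replicate {k : ℕ} (π : k.Partition) (n : ℕ) :
    (π.parts + Multiset.replicate n 0).filter (· ≠ 0) = π.parts := by
  rw [Multiset.filter_add, Multiset.filter_eq_self.2 fun i hi => (π.parts_pos hi).ne',
    Multiset.filter_eq_nil.2 fun i hi => by simpa using Multiset.eq_of_mem_replicate hi, add_zero]

/-- Padding with zeros, as a bijection between the two encodings of partitions in a rectangle. -/
def boxMultisetsEquivPartitions (l m k : ℕ) : boxMultisets l m k ≃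
    {π : k.Partition // π.parts.card ≤ l ∧ ∀ i ∈ π.parts, i ≤ m} where
  toFun s := ⟨.ofSums k s.1 s.2.2.2,
    (Multiset.card_le_card (Multiset.filter_le _ _)).trans s.2.1.le,
    fun i hi => s.2.2.1 i (Multiset.mem_of_mem_filter hi)⟩
  invFun π := ⟨π.1.parts + Multiset.replicate (l - π.1.parts.card) 0,
    by simp [π.2.1],
    fun i hi => (Multiset.mem_add.1 hi).elim (π.2.2 i)
      fun h => (Multiset.eq_of_mem_replicate h).trans_le m.zero_le,
    by simp [π.1.parts_sum]⟩
  left_inv := by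
    rintro ⟨s, rfl, -⟩
    exact Subtype.ext (filter_ne_zero_add_replicate s)
  right_inv π := Subtype.ext <| Nat.Partition.ext <| filter_ne_zero_parts_add_replicate _ _

theorem finite_boxMultisets (l m k : ℕ) : (boxMultisets l m k).Finite :=
  .of_equiv _ (boxMultisetsEquivPartitions l m k).symm

theorem ncard_boxMultisets (l m k : ℕ) : (boxMultisets l m k).ncard = rectPartitions k l m :=
  Nat.card_congr (boxMultisetsEquivPartitions l m k)

theorem boxMultisets_zero_left (m k : ℕ) :
    boxMultisets 0 m k = if k = 0 then {0} else ∅ := by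
  ext s
  split_ifs with hk <;> simp only [boxMultisets, Multiset.card_eq_zero] <;> aesop

theorem boxMultisets_zero_right (l k : ℕ) :
    boxMultisets l 0 k = if k = 0 then {Multiset.replicate l 0} else ∅ := by
  ext s
  have hs : s.card = l ∧ (∀ i ∈ s, i ≤ 0) ↔ s = Multiset.replicate l 0 := by
    simp [Multiset.eq_replicate]
  rw [boxMultisets, Set.mem_ofPred_eq, ← and_assoc, hs]
  split_ifs with hk <;> aesop

theorem boxMultisets_succ (l m k : ℕ) : boxMultisets (l + 1) (m + 1) k =
    boxMultisets (l + 1) m k ∪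
      if m + 1 ≤ k then Multiset.cons (m + 1) '' boxMultisets l (m + 1) (k - (m + 1)) else ∅ := by
  ext s
  constructor
  · rintro ⟨hcard, hle, hsum⟩
    by_cases hs : m + 1 ∈ s
    · obtain ⟨t, rfl⟩ := Multiset.exists_cons_of_mem hs
      rw [Multiset.sum_cons] at hsum
      rw [if_pos (by omega)]
      exact .inr ⟨t, ⟨by simpa using hcard, fun i hi => hle i (Multiset.mem_cons_of_mem hi),
        by omega⟩, rfl⟩
    · exact .inl ⟨hcard, fun i hi =>
        Nat.le_of_lt_succ ((hle i hi).lt_of_ne fun h => hs (h ▸ hi)), hsum⟩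
  · rintro (⟨hcard, hle, hsum⟩ | hs)
    · exact ⟨hcard, fun i hi => (hle i hi).trans m.le_succ, hsum⟩
    · split_ifs at hs with hk
      · obtain ⟨t, ⟨hcard, hle, hsum⟩, rfl⟩ := hs
        exact ⟨by simp [hcard], by simpa using hle, by rw [Multiset.sum_cons]; omega⟩
      · exact hs.elim

theorem rectPartitions_zero_left (k m : ℕ) : rectPartitions k 0 m = if k = 0 then 1 else 0 := by
  rw [← ncard_boxMultisets, boxMultisets_zero_left]
  split_ifs <;> simp

theorem rectPartitions_zero_right (k l : ℕ) : rectPartitions k l 0 = if k = 0 then 1 else 0 := by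
  rw [← ncard_boxMultisets, boxMultisets_zero_right]
  split_ifs <;> simp

theorem rectPartitions_succ (k l m : ℕ) : rectPartitions k (l + 1) (m + 1) =
    rectPartitions k (l + 1) m +
      if m + 1 ≤ k then rectPartitions (k - (m + 1)) l (m + 1) else 0 := by
  simp only [← ncard_boxMultisets]
  rw [boxMultisets_succ]
  split_ifs with hk
  · rw [Set.ncard_union_eq _ (finite_boxMultisets ..) ((finite_boxMultisets ..).image _),
      Set.ncard_image_of_injective _ fun _ _ => (Multiset.cons_inj_right _).1]
    rw [Set.disjoint_left]
    rintro _ ⟨-, hle, -⟩ ⟨t, -, rfl⟩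
    exact m.lt_irrefl (hle _ (Multiset.mem_cons_self _ _))
  · rw [Set.union_empty, add_zero]

end BoxMultisets

section GaussBinom

open Finset Polynomial

/-- The `q`-factorial `[n]! = ∏_{j < n} (1 + q + ⋯ + q ^ j)`. -/
def qFactorial {R : Type*} [CommSemiring R] (q : R) (n : ℕ) : R :=
  ∏ j ∈ range n, ∑ i ∈ range (j + 1), q ^ i

/-- The Gaussian binomial coefficient of `l + m` over `m`, indexed by the sides of the rectangle
and defined by `q`-Pascal recursion so that it makes sense in any commutative semiring. -/
def gaussBinom {R : Type*} [CommSemiring R] (q : R) : ℕ → ℕ → R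
  | 0, _ => 1
  | _ + 1, 0 => 1
  | l + 1, m + 1 => gaussBinom q (l + 1) m + q ^ (m + 1) * gaussBinom q l (m + 1)

variable {R : Type*} [CommSemiring R]

theorem gaussBinom_mul_qFactorial (q : R) (l m : ℕ) :
    gaussBinom q l m * (qFactorial q l * qFactorial q m) = qFactorial q (l + m) := by
  induction l generalizing m with
  | zero => simp [gaussBinom, qFactorial]
  | succ l ihl =>
    induction m with
    | zero => simp [gaussBinom, qFactorial]
    | succ m ihm =>
      have hsucc (n : ℕ) : qFactorial q (n + 1) = qFactorial q n * ∑ i ∈ range (n + 1), q ^ i :=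
        prod_range_succ ..
      have hsum : ∑ i ∈ range (l + 1 + m + 1), q ^ i =
          ∑ i ∈ range (m + 1), q ^ i + q ^ (m + 1) * ∑ i ∈ range (l + 1), q ^ i := by
        rw [show l + 1 + m + 1 = m + 1 + (l + 1) by ring, sum_range_add, mul_sum]
        simp only [pow_add]
      have ihl' := ihl (m + 1)
      rw [show l + (m + 1) = l + 1 + m by ring] at ihl'
      calc gaussBinom q (l + 1) (m + 1) * (qFactorial q (l + 1) * qFactorial q (m + 1))
          = gaussBinom q (l + 1) m * (qFactorial q (l + 1) * qFactorial q m) *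
              ∑ i ∈ range (m + 1), q ^ i +
            q ^ (m + 1) * (gaussBinom q l (m + 1) * (qFactorial q l * qFactorial q (m + 1))) *
              ∑ i ∈ range (l + 1), q ^ i := by
            rw [gaussBinom, hsucc l, hsucc m]
            ring
        _ = qFactorial q (l + 1 + m) * ∑ i ∈ range (l + 1 + m + 1), q ^ i := by
            rw [ihm, ihl', hsum]
            ring
        _ = qFactorial q (l + 1 + (m + 1)) := (hsucc _).symm

theorem map_gaussBinom {S : Type*} [CommSemiring S] (f : R →+* S) (q : R) (l m : ℕ) :
    f (gaussBinom q l m) = gaussBinom (f q) l m := by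
  induction l generalizing m with
  | zero => simp [gaussBinom]
  | succ l ihl =>
    induction m with
    | zero => simp [gaussBinom]
    | succ m ihm => simp [gaussBinom, ihl, ihm]

theorem gaussBinom_one (l m : ℕ) : gaussBinom (1 : R) l m = (l + m).choose m := by
  induction l generalizing m with
  | zero => simp [gaussBinom]
  | succ l ihl =>
    induction m with
    | zero => simp [gaussBinom]
    | succ m ihm =>
      rw [gaussBinom, ihm, ihl, one_pow, one_mul, ← Nat.cast_add, ← add_assoc, ← add_assoc,
        add_right_comm l 1 m, Nat.choose_succ_succ (l + m + 1)]

theorem coeff_gaussBinom_X (k l m : ℕ) :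
    (gaussBinom (X : ℕ[X]) l m).coeff k = rectPartitions k l m := by
  induction l generalizing m k with
  | zero => rw [gaussBinom, rectPartitions_zero_left, coeff_one]
  | succ l ihl =>
    induction m generalizing k with
    | zero => rw [gaussBinom, rectPartitions_zero_right, coeff_one]
    | succ m ihm => rw [gaussBinom, rectPartitions_succ, coeff_add, coeff_X_pow_mul', ihm, ihl]

theorem coeff_le_eval_one (p : ℕ[X]) (k : ℕ) : p.coeff k ≤ p.eval 1 := by
  by_cases hk : k ∈ p.support
  · simpa [eval_eq_sum, sum_def] using single_le_sum_of_canonicallyOrdered (f := p.coeff) hk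
  · simp [notMem_support_iff.1 hk]

theorem eval_div_pow_mod_eq_coeff {p : ℕ[X]} {b : ℕ} (hp : ∀ k, p.coeff k < b) (k : ℕ) :
    p.eval b / b ^ k % b = p.coeff k := by
  have heval (p : ℕ[X]) : p.eval b = b * p.divX.eval b + p.coeff 0 := by
    conv_lhs => rw [← divX_mul_X_add p]
    simp [mul_comm]
  induction k generalizing p with
  | zero => rw [heval, pow_zero, Nat.div_one, Nat.mul_add_mod, Nat.mod_eq_of_lt (hp 0)]
  | succ k ih =>
    rw [pow_succ', ← Nat.div_div_eq_div_mul, heval, Nat.mul_add_div (Nat.zero_lt_of_lt (hp 0)),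
      Nat.div_eq_of_lt (hp 0), add_zero, ih (fun j => by rw [coeff_divX]; exact hp _), coeff_divX]

/-- Kronecker substitution: evaluated at `q = 2 ^ (l + m + 1)`, the Gaussian binomial coefficient
lists its coefficients as base-`q` digits. -/
theorem rectPartitions_eq_digit (k l m : ℕ) : rectPartitions k l m =
    qFactorial (2 ^ (l + m + 1)) (l + m) /
      (qFactorial (2 ^ (l + m + 1)) l * qFactorial (2 ^ (l + m + 1)) m) /
        (2 ^ (l + m + 1)) ^ k % 2 ^ (l + m + 1) := by
  set b := 2 ^ (l + m + 1)
  have heval (c : ℕ) : (gaussBinom X l m).eval c = gaussBinom c l m := by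
    simpa using map_gaussBinom (evalRingHom c) X l m
  have hcoeff (j : ℕ) : (gaussBinom (X : ℕ[X]) l m).coeff j < b :=
    calc (gaussBinom X l m).coeff j ≤ (l + m).choose m :=
          (coeff_le_eval_one _ _).trans_eq ((heval 1).trans (gaussBinom_one l m))
      _ ≤ 2 ^ (l + m) := Nat.choose_le_two_pow _ _
      _ < b := Nat.pow_lt_pow_succ one_lt_two
  have hpos (n : ℕ) : 0 < qFactorial b n :=
    prod_pos fun j _ => sum_pos (fun i _ => by positivity) nonempty_range_add_one
  rw [← coeff_gaussBinom_X, ← eval_div_pow_mod_eq_coeff hcoeff, heval,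
    Nat.eq_div_of_mul_eq_left (mul_pos (hpos l) (hpos m)).ne' (gaussBinom_mul_qFactorial b l m)]

theorem rectPartitions_comm (k l m : ℕ) : rectPartitions k l m = rectPartitions k m l := by
  rw [rectPartitions_eq_digit, rectPartitions_eq_digit, add_comm l, mul_comm (qFactorial _ l)]

set_option maxRecDepth 100000 in
theorem rectPartitions_pred_lt_of_lt_sixteen : ∀ l ∈ Ico 8 16, ∀ m ∈ Ico 8 16,
    ∀ k ∈ Icc 2 (l * m / 2), rectPartitions (k - 1) l m < rectPartitions k l m := by
  simp only [rectPartitions_eq_digit]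
  decide +kernel

end GaussBinom

section Ladder

variable {K M : Type*} [Field K] [AddCommGroup M] [Module K M]

/-- A family of subspaces on which `D` lowers and `U` raises the index by one, with the commutator
`D U - U D` acting on `V k` as the scalar `c k`: the weight spaces of a representation of `𝔰𝔩₂`
whose weights are bounded on one side. -/
structure IsLadder (V : ℤ → Submodule K M) (D U : Module.End K M) (c : ℤ → K) : Prop where
  lower_mem {k : ℤ} {x : M} : x ∈ V k → D x ∈ V (k - 1)
  raise_mem {k : ℤ} {x : M} : x ∈ V k → U x ∈ V (k + 1)
  commutator {k : ℤ} {x : M} : x ∈ V k → D (U x) - U (D x) = c k • x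
  eq_bot_of_neg {k : ℤ} : k < 0 → V k = ⊥

namespace IsLadder

variable {V : ℤ → Submodule K M} {D U : Module.End K M} {c : ℤ → K}

/-- The extra term `a • x` is what makes the induction work: applying `D` to the equation turns it
into the same equation for `D x ∈ V (k - 1)` with `a` replaced by `a + c k`. -/
theorem eq_zero_of_lower_raise_add_smul_eq_zero [LinearOrder K] [IsStrictOrderedRing K]
    (h : IsLadder V D U c) {k : ℤ} (hc : ∀ j ≤ k, 0 < c j) {a : K} (ha : 0 ≤ a) {x : M}
    (hx : x ∈ V k) (hDU : D (U x) + a • x = 0) : x = 0 := by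
  obtain hk | _ := lt_or_ge k 0
  · simpa [h.eq_bot_of_neg hk] using hx
  have hpos : 0 < a + c k := add_pos_of_nonneg_of_pos ha (hc k le_rfl)
  have hUD : U (D x) + (a + c k) • x = 0 := by
    rw [add_smul, ← h.commutator hx, ← hDU]
    abel
  have hDx : D x = 0 := by
    refine eq_zero_of_lower_raise_add_smul_eq_zero h (fun j hj => hc j (by omega)) hpos.le
      (h.lower_mem hx) ?_
    rw [← map_smul, ← map_add, hUD, map_zero]
  rw [hDx, map_zero, zero_add] at hUD
  exact (smul_eq_zero.1 hUD).resolve_left hpos.ne'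
termination_by (k + 1).toNat

/-- The restriction of the lowering operator to one step of the ladder. -/
def lowerAt (h : IsLadder V D U c) (k : ℤ) : V (k + 1) →ₗ[K] V k :=
  D.restrict fun _ hx => by simpa using h.lower_mem hx

theorem lowerAt_surjective [LinearOrder K] [IsStrictOrderedRing K] (h : IsLadder V D U c)
    {k : ℤ} [FiniteDimensional K (V k)] (hc : ∀ j ≤ k, 0 < c j) :
    Function.Surjective (h.lowerAt k) := by
  let raiseAt : V k →ₗ[K] V (k + 1) := U.restrict fun _ => h.raise_mem
  have hinj : Function.Injective (h.lowerAt k ∘ₗ raiseAt) := by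
    rw [injective_iff_map_eq_zero]
    intro x hx
    refine Subtype.ext (h.eq_zero_of_lower_raise_add_smul_eq_zero hc le_rfl x.2 ?_)
    rw [zero_smul, add_zero]
    exact congrArg Subtype.val hx
  exact .of_comp (g := raiseAt) (LinearMap.injective_iff_surjective.1 hinj)

theorem finrank_lt_finrank_iff [LinearOrder K] [IsStrictOrderedRing K] (h : IsLadder V D U c)
    {k : ℤ} [FiniteDimensional K (V k)] [FiniteDimensional K (V (k + 1))] (hc : ∀ j ≤ k, 0 < c j) :
    Module.finrank K (V k) < Module.finrank K (V (k + 1)) ↔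
      ∃ x ≠ 0, x ∈ V (k + 1) ∧ D x = 0 := by
  have hrank := (h.lowerAt k).finrank_range_add_finrank_ker
  rw [LinearMap.range_eq_top.2 (h.lowerAt_surjective hc), finrank_top] at hrank
  rw [← hrank, lt_add_iff_pos_right, Module.finrank_pos_iff_exists_ne_zero]
  constructor
  · rintro ⟨⟨⟨x, hx⟩, hDx⟩, hx0⟩
    exact ⟨x, by simpa using hx0, hx, congrArg Subtype.val hDx⟩
  · rintro ⟨x, hx0, hx, hDx⟩
    exact ⟨⟨⟨x, hx⟩, Subtype.ext hDx⟩, by simpa [← Subtype.coe_ne_coe] using hx0⟩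

end IsLadder

end Ladder

section WeightedHomogeneous

open MvPolynomial

variable {σ R M : Type*} [CommSemiring R]

theorem monomial_sub_single_mul_X {d : σ →₀ ℕ} {i : σ} (hi : i ∈ d.support) (r : R) :
    monomial (d - Finsupp.single i 1) r * X i = monomial d r := by
  rw [X, monomial_mul, mul_one, tsub_add_cancel_of_le]
  simpa [Nat.one_le_iff_ne_zero] using hi

theorem isWeightedHomogeneous_mkDerivation [AddCommGroup M] {w : σ → M}
    {f : σ → MvPolynomial σ R} {b n : M} {p : MvPolynomial σ R}
    (hf : ∀ i, IsWeightedHomogeneous w (f i) (w i + b)) (hp : IsWeightedHomogeneous w p n) :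
    IsWeightedHomogeneous w (mkDerivation R f p) (n + b) := by
  induction hp using IsWeightedHomogeneous.induction_on with
  | zero => rw [map_zero]; exact isWeightedHomogeneous_zero ..
  | add p q _ _ hp hq => rw [map_add]; exact hp.add hq
  | monomial d r hd =>
    rw [mkDerivation_monomial]
    refine (weightedHomogeneousSubmodule R w (n + b)).smul_mem r ?_
    refine .sum _ _ _ fun i hi => ?_
    have hle : Finsupp.single i 1 ≤ d := by simpa [Nat.one_le_iff_ne_zero] using hi
    have hweight : Finsupp.weight w (d - Finsupp.single i 1) = n - w i := by
      rw [eq_sub_iff_add_eq, ← hd, ← one_smul ℕ (w i), ← Finsupp.weight_single, ← map_add,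
        tsub_add_cancel_of_le hle]
    simpa [← add_assoc] using (isWeightedHomogeneous_monomial w _ (d i : R) hweight).mul (hf i)

/-- Euler's identity, twisted by the character `c`. -/
theorem mkDerivation_smul_X_of_isWeightedHomogeneous [AddCommMonoid M] (c : M →+ R) {w : σ → M}
    {n : M} {p : MvPolynomial σ R} (hp : IsWeightedHomogeneous w p n) :
    mkDerivation R (fun i => c (w i) • X i) p = c n • p := by
  induction hp using IsWeightedHomogeneous.induction_on with
  | zero => simp
  | add p q _ _ hp hq => rw [map_add, hp, hq, smul_add]
  | monomial d r hd =>
    have hterm (i : σ) (hi : i ∈ d.support) :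
        monomial (d - Finsupp.single i 1) (d i : R) • c (w i) • X (R := R) i =
          monomial d (d i • c (w i)) := by
      rw [smul_eq_mul, mul_smul_comm, monomial_sub_single_mul_X hi, smul_monomial, smul_eq_mul,
        nsmul_eq_mul, mul_comm]
    rw [mkDerivation_monomial, Finsupp.sum, Finset.sum_congr rfl hterm, ← map_sum, ← hd,
      Finsupp.weight_apply, map_finsuppSum, Finsupp.sum, smul_monomial, smul_monomial]
    simp [mul_comm]

/-- The monomials of weighted degree `n`, as a basis of the weighted homogeneous polynomials. -/
noncomputable def weightedMonomialBasis [AddCommMonoid M] (w : σ → M) (n : M) :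
    Module.Basis {d : σ →₀ ℕ | Finsupp.weight w d = n} R (weightedHomogeneousSubmodule R w n) :=
  .ofRepr <| (LinearEquiv.ofEq _ _ (weightedHomogeneousSubmodule_eq_finsupp_supported R w n)).trans
    (AddMonoidAlgebra.supportedEquivFinsupp _)

end WeightedHomogeneous

section Seminvariants

open MvPolynomial

/-- The bidegree (degree, weight) of the coefficient `a_i` of a binary form
`∑ i, a_i * x ^ (m - i) * y ^ i` of degree `m`. Integers are used so that the weight can be
lowered freely. -/
def isobaricWeight (m : ℕ) (i : Fin (m + 1)) : ℤ × ℤ := (1, (i : ℕ))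

section

variable (R : Type*) [CommRing R] (m : ℕ)

/-- The derivation `a_i ↦ i * a_{i-1}`. At `i = 0` the index wraps around to `m`, with
coefficient zero. -/
noncomputable def lowering :
    Derivation R (MvPolynomial (Fin (m + 1)) R) (MvPolynomial (Fin (m + 1)) R) :=
  mkDerivation R fun i => ((i : ℕ) : R) • X (i - 1)

/-- The derivation `a_i ↦ (m - i) * a_{i+1}`. At `i = m` the index wraps around to `0`, with
coefficient zero. -/
noncomputable def raising :
    Derivation R (MvPolynomial (Fin (m + 1)) R) (MvPolynomial (Fin (m + 1)) R) :=
  mkDerivation R fun i => ((m : R) - (i : ℕ)) • X (i + 1)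

/-- The character `(l, k) ↦ m * l - 2 * k` by which `[lowering, raising]` acts. -/
def commutatorCharacter : ℤ × ℤ →+ R :=
  (Int.castAddHom R).comp ((m : ℤ) • AddMonoidHom.fst ℤ ℤ - (2 : ℤ) • AddMonoidHom.snd ℤ ℤ)

variable {R m}

theorem isWeightedHomogeneous_lowering {p : MvPolynomial (Fin (m + 1)) R} {l k : ℤ}
    (hp : IsWeightedHomogeneous (isobaricWeight m) p (l, k)) :
    IsWeightedHomogeneous (isobaricWeight m) (lowering R m p) (l, k - 1) := by
  have hX (i : Fin (m + 1)) : IsWeightedHomogeneous (isobaricWeight m)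
      (((i : ℕ) : R) • X (R := R) (i - 1)) (isobaricWeight m i + (0, -1)) := by
    by_cases hi : i = 0
    · simp [hi, isWeightedHomogeneous_zero R]
    · have hweight : isobaricWeight m (i - 1) = isobaricWeight m i + (0, -1) := by
        have hpos : 1 ≤ (i : ℕ) := Fin.pos_iff_ne_zero.2 hi
        simp [isobaricWeight, Fin.val_sub_one_of_ne_zero hi, Nat.cast_sub hpos, Int.sub_eq_add_neg]
      rw [smul_eq_C_mul, ← hweight]
      exact (isWeightedHomogeneous_X R _ _).C_mul _
  have h := isWeightedHomogeneous_mkDerivation hX hp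
  rw [Prod.mk_add_mk, add_zero, ← sub_eq_add_neg] at h
  exact h

theorem isWeightedHomogeneous_raising {p : MvPolynomial (Fin (m + 1)) R} {l k : ℤ}
    (hp : IsWeightedHomogeneous (isobaricWeight m) p (l, k)) :
    IsWeightedHomogeneous (isobaricWeight m) (raising R m p) (l, k + 1) := by
  have hX (i : Fin (m + 1)) : IsWeightedHomogeneous (isobaricWeight m)
      (((m : R) - (i : ℕ)) • X (R := R) (i + 1)) (isobaricWeight m i + (0, 1)) := by
    obtain rfl | hi := eq_or_ne i (Fin.last m)
    · simp [isWeightedHomogeneous_zero R]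
    · have hweight : isobaricWeight m (i + 1) = isobaricWeight m i + (0, 1) := by
        simp [isobaricWeight, Fin.val_add_one_of_lt (Fin.lt_last_iff_ne_last.2 hi)]
      rw [smul_eq_C_mul, ← hweight]
      exact (isWeightedHomogeneous_X R _ _).C_mul _
  have h := isWeightedHomogeneous_mkDerivation hX hp
  rw [Prod.mk_add_mk, add_zero] at h
  exact h

theorem commutator_lowering_raising :
    ⁅lowering R m, raising R m⁆ =
      mkDerivation R fun i => commutatorCharacter R m (isobaricWeight m i) • X i := by
  refine derivation_ext fun i => ?_
  have hDU : lowering R m (raising R m (X i)) = (((m : R) - (i : ℕ)) * ((i : ℕ) + 1)) • X i := by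
    rw [raising, mkDerivation_X, Derivation.map_smul, lowering, mkDerivation_X,
      add_sub_cancel_right, smul_smul]
    obtain rfl | hi := eq_or_ne i (Fin.last m)
    · simp
    · simp [Fin.val_add_one_of_lt (Fin.lt_last_iff_ne_last.2 hi)]
  have hUD : raising R m (lowering R m (X i)) = ((i : ℕ) * ((m : R) - (i : ℕ) + 1)) • X i := by
    rw [lowering, mkDerivation_X, Derivation.map_smul, raising, mkDerivation_X,
      sub_add_cancel, smul_smul]
    obtain rfl | hi := eq_or_ne i 0
    · simp
    · have hpos : 1 ≤ (i : ℕ) := Fin.pos_iff_ne_zero.2 hi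
      rw [Fin.val_sub_one_of_ne_zero hi, Nat.cast_sub hpos, Nat.cast_one, ← sub_add]
  have hchar : commutatorCharacter R m (isobaricWeight m i) = m - 2 * (i : ℕ) := by
    simp [commutatorCharacter, isobaricWeight]
  rw [Derivation.commutator_apply, hDU, hUD, mkDerivation_X, ← sub_smul, hchar]
  congr 1
  ring

end

theorem weight_isobaricWeight (m : ℕ) (d : Fin (m + 1) →₀ ℕ) :
    Finsupp.weight (isobaricWeight m) d =
      (((d.toMultiset.map Fin.val).card : ℤ), (((d.toMultiset.map Fin.val).sum : ℕ) : ℤ)) := by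
  induction d using Finsupp.induction_linear with
  | zero => simp [Prod.zero_eq_mk]
  | add f g hf hg => simp [hf, hg]
  | single i n =>
    simp [Finsupp.weight_single, isobaricWeight, Multiset.map_nsmul, Multiset.sum_nsmul]

theorem bijOn_map_val_toMultiset (l m k : ℕ) :
    Set.BijOn (fun d : Fin (m + 1) →₀ ℕ => d.toMultiset.map Fin.val)
      {d | Finsupp.weight (isobaricWeight m) d = ((l : ℤ), (k : ℤ))} (boxMultisets l m k) := by
  have hmem (d : Fin (m + 1) →₀ ℕ) :
      d ∈ {d | Finsupp.weight (isobaricWeight m) d = ((l : ℤ), (k : ℤ))} ↔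
        d.toMultiset.map Fin.val ∈ boxMultisets l m k := by
    have hle : ∀ i ∈ d.toMultiset.map Fin.val, i ≤ m := by
      intro i hi
      obtain ⟨j, -, rfl⟩ := Multiset.mem_map.1 hi
      exact j.is_le
    rw [Set.mem_ofPred_eq, weight_isobaricWeight, Prod.mk.injEq, Nat.cast_inj, Nat.cast_inj]
    exact and_congr_right fun _ => (and_iff_right hle).symm
  refine ⟨fun d => (hmem d).1, ?_, fun s hs => ?_⟩
  · exact ((Multiset.map_injective Fin.val_injective).comp Multiset.toFinsupp.symm.injective).injOn
  · have hmap : (Multiset.toFinsupp (s.map (Fin.ofNat (m + 1)))).toMultiset.map Fin.val = s := by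
      rw [Multiset.toFinsupp_toMultiset, Multiset.map_map]
      exact (Multiset.map_congr rfl fun i hi =>
        Nat.mod_eq_of_lt (Nat.lt_succ_of_le (hs.2.1 i hi))).trans s.map_id
    exact ⟨_, (hmem _).2 (hmap.symm ▸ hs), hmap⟩

theorem isLadder_isobaric (K : Type*) [Field K] (m : ℕ) (l : ℤ) :
    IsLadder (fun k => weightedHomogeneousSubmodule K (isobaricWeight m) (l, k))
      (lowering K m).toLinearMap (raising K m).toLinearMap
      (fun k => commutatorCharacter K m (l, k)) where
  lower_mem := isWeightedHomogeneous_lowering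
  raise_mem := isWeightedHomogeneous_raising
  commutator {k p} hp := by
    rw [← mkDerivation_smul_X_of_isWeightedHomogeneous _ hp, ← commutator_lowering_raising]
    rfl
  eq_bot_of_neg {k} hk := by
    refine (Submodule.eq_bot_iff _).2 fun p hp => MvPolynomial.ext _ _ fun d => ?_
    refine IsWeightedHomogeneous.coeff_eq_zero hp d fun hd => hk.not_ge ?_
    rw [weight_isobaricWeight, Prod.mk.injEq] at hd
    exact hd.2 ▸ Int.natCast_nonneg _

theorem finiteDimensional_isobaric (K : Type*) [Field K] (m l k : ℕ) :
    FiniteDimensional K (weightedHomogeneousSubmodule K (isobaricWeight m) (l, k)) := by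
  have hfin := ((bijOn_map_val_toMultiset l m k).finite_iff_finite.2
    (finite_boxMultisets l m k)).to_subtype
  exact .of_basis (weightedMonomialBasis _ _)

theorem finrank_isobaric (K : Type*) [Field K] (m l k : ℕ) :
    Module.finrank K (weightedHomogeneousSubmodule K (isobaricWeight m) (l, k)) =
      rectPartitions k l m := by
  rw [Module.finrank_eq_nat_card_basis (weightedMonomialBasis _ _), ← ncard_boxMultisets]
  exact Nat.card_congr ((bijOn_map_val_toMultiset l m k).equiv _)

/-- A seminvariant of the generic binary form of degree `m`, of degree `l` and weight `k`: a
polynomial in the coefficients of the form that is a highest weight vector for `𝔰𝔩₂`. -/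
def IsSeminvariant {R : Type*} [CommRing R] (m : ℕ) (l k : ℤ)
    (p : MvPolynomial (Fin (m + 1)) R) : Prop :=
  IsWeightedHomogeneous (isobaricWeight m) p (l, k) ∧ lowering R m p = 0

theorem IsSeminvariant.mul {R : Type*} [CommRing R] {m : ℕ} {l k l' k' : ℤ}
    {p q : MvPolynomial (Fin (m + 1)) R}
    (hp : IsSeminvariant m l k p) (hq : IsSeminvariant m l' k' q) :
    IsSeminvariant m (l + l') (k + k') (p * q) :=
  ⟨hp.1.mul hq.1, by simp [Derivation.leibniz, hp.2, hq.2]⟩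

theorem isSeminvariant_X_zero_pow (R : Type*) [CommRing R] (m l : ℕ) :
    IsSeminvariant m l 0 (X (R := R) 0 ^ l) :=
  ⟨by simpa [isobaricWeight] using (isWeightedHomogeneous_X R (isobaricWeight m) 0).pow l,
    by simp [lowering, Derivation.leibniz_pow]⟩

/-- A qualitative form of the Cayley–Sylvester theorem. -/
theorem rectPartitions_lt_iff_exists_isSeminvariant {l m k : ℕ} (hk : 2 * k < l * m) :
    rectPartitions k l m < rectPartitions (k + 1) l m ↔
      ∃ p : MvPolynomial (Fin (m + 1)) ℚ, p ≠ 0 ∧ IsSeminvariant m l (k + 1) p := by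
  have hfin := finiteDimensional_isobaric ℚ m l k
  have hfin' := finiteDimensional_isobaric ℚ m l (k + 1)
  have hc (j : ℤ) (hj : j ≤ k) : 0 < commutatorCharacter ℚ m (l, j) := by
    have hjk : 2 * j < m * l := by
      rw [mul_comm (m : ℤ)]
      norm_cast
      omega
    have hjk' : (2 * j : ℚ) < m * l := mod_cast hjk
    simpa [commutatorCharacter] using hjk'
  rw [Nat.cast_succ] at hfin'
  rw [← finrank_isobaric ℚ, ← finrank_isobaric ℚ, Nat.cast_succ]
  exact (isLadder_isobaric ℚ m l).finrank_lt_finrank_iff hc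

end Seminvariants

section Unimodality

/-- The sequence `p_k(l, m)` increases strictly from `k = 1` up to the middle `k = l * m / 2`. The
step from `k = 0` is left out because `p_0(l, m) = p_1(l, m) = 1` for positive `l` and `m`. -/
def IsStrictlyUnimodal (l m : ℕ) : Prop :=
  ∀ k, 2 ≤ k → 2 * k ≤ l * m → rectPartitions (k - 1) l m < rectPartitions k l m

namespace IsStrictlyUnimodal

variable {l l' m k : ℕ}

theorem symm (h : IsStrictlyUnimodal l m) : IsStrictlyUnimodal m l := fun k hk hkm => by
  simpa only [rectPartitions_comm _ l] using h k hk (by rwa [mul_comm l m])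

theorem exists_isSeminvariant (h : IsStrictlyUnimodal l m) (hk : k = 0 ∨ 2 ≤ k)
    (hkm : 2 * k ≤ l * m) :
    ∃ p : MvPolynomial (Fin (m + 1)) ℚ, p ≠ 0 ∧ IsSeminvariant m l k p := by
  obtain rfl | hk := hk
  · exact ⟨MvPolynomial.X 0 ^ l, pow_ne_zero _ (MvPolynomial.X_ne_zero _),
      isSeminvariant_X_zero_pow ℚ m l⟩
  · obtain ⟨k, rfl⟩ := Nat.exists_eq_add_of_le' (one_le_two.trans hk)
    exact_mod_cast (rectPartitions_lt_iff_exists_isSeminvariant (by omega)).1 (h _ hk hkm)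

/-- Parity ensures that the two middles `l * m / 2` and `l' * m / 2` add up to the middle of the
sum, so that every `k` splits into weights of seminvariants. -/
theorem add (h : IsStrictlyUnimodal l m) (h' : IsStrictlyUnimodal l' m) (heven : Even (l' * m))
    (hlm : 4 ≤ l * m) (hlm' : 6 ≤ l' * m) : IsStrictlyUnimodal (l + l') m := by
  intro k hk hkm
  have hsplit : ∃ a b, k = a + b ∧ (a = 0 ∨ 2 ≤ a) ∧ (b = 0 ∨ 2 ≤ b) ∧
      2 * a ≤ l * m ∧ 2 * b ≤ l' * m := by
    obtain ⟨n, hn⟩ := heven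
    rw [add_mul] at hkm
    obtain hkn | rfl | hkn : k ≤ n ∨ k = n + 1 ∨ n + 2 ≤ k := by omega
    · exact ⟨0, k, by omega⟩
    · exact ⟨2, n - 1, by omega⟩
    · exact ⟨k - n, n, by omega⟩
  obtain ⟨a, b, rfl, ha, hb, ham, hbm⟩ := hsplit
  obtain ⟨p, hp0, hp⟩ := h.exists_isSeminvariant ha ham
  obtain ⟨q, hq0, hq⟩ := h'.exists_isSeminvariant hb hbm
  obtain ⟨j, hj⟩ := Nat.exists_eq_add_of_le' (one_le_two.trans hk)
  rw [hj] at hkm ⊢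
  rw [Nat.add_sub_cancel]
  refine (rectPartitions_lt_iff_exists_isSeminvariant (by omega)).2 ⟨p * q, mul_ne_zero hp0 hq0, ?_⟩
  have hpq := hp.mul hq
  norm_cast at hpq ⊢
  rwa [← hj]

theorem of_forall_lt_sixteen (hm : 8 ≤ m) (h : ∀ l, 8 ≤ l → l < 16 → IsStrictlyUnimodal l m)
    (hl : 8 ≤ l) : IsStrictlyUnimodal l m := by
  induction l using Nat.strong_induction_on with
  | _ l ih =>
    obtain hl' | hl' := lt_or_ge l 16
    · exact h l hl hl'
    · have hprev := ih (l - 8) (by omega) (by omega)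
      have hlm : 8 * 8 ≤ (l - 8) * m := Nat.mul_le_mul (by omega) hm
      have heven : Even (8 * m) := ⟨4 * m, by ring⟩
      simpa [Nat.sub_add_cancel hl] using
        hprev.add (h 8 le_rfl (by omega)) heven (by omega) (by omega)

theorem of_lt_sixteen (hl : 8 ≤ l) (hl' : l < 16) (hm : 8 ≤ m) (hm' : m < 16) :
    IsStrictlyUnimodal l m := fun k hk hkm =>
  rectPartitions_pred_lt_of_lt_sixteen l (Finset.mem_Ico.2 ⟨hl, hl'⟩) m
    (Finset.mem_Ico.2 ⟨hm, hm'⟩) k (Finset.mem_Icc.2 ⟨hk, by omega⟩)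

end IsStrictlyUnimodal

end Unimodality

/-- Strict unimodality of Gaussian coefficients: for `ℓ, m ≥ 8` and `2 ≤ k ≤ ℓm/2`,
one has `p_k(ℓ,m) − p_{k−1}(ℓ,m) ≥ 1`. -/
theorem strict_unimodality (ℓ m k : ℕ) (hl : 8 ≤ ℓ) (hm : 8 ≤ m)
    (hk : 2 ≤ k) (hk2 : 2 * k ≤ ℓ * m) :
    (rectPartitions k ℓ m : ℤ) - (rectPartitions (k - 1) ℓ m : ℤ) ≥ 1 := by
  have hsmall (l : ℕ) (hl : 8 ≤ l) (hl' : l < 16) : IsStrictlyUnimodal l m :=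
    .symm <| .of_forall_lt_sixteen hl (fun n hn hn' => .of_lt_sixteen hn hn' hl hl') hm
  have hlt := (IsStrictlyUnimodal.of_forall_lt_sixteen hm hsmall hl) k hk hk2
  omega
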